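/- Fix 0 < δ < 1/2. There is a constant C (depending on δ) such that for every h ∈ C₀^∞(ℝ₊×ℝ³) and every t ≥ 0: ‖h'(t,·)‖_{L⁶({x : |x| ∉ [(1−δ)t, (1+δ)t]})} ≤ C⟨t⟩^{−1} ( Σ_{|α|≤1} ‖Γ^α h'(t,·)‖₂ + ‖⟨t+r⟩ □h(t,·)‖₂ ). -/

import Mathlib

open MeasureTheory Real Finset

noncomputable section

/-- Points of space-time `ℝ×ℝ³`, written `X = (x₀,x₁,x₂,x₃)` with `x₀ = t`. -/
abbrev Pt : Type := Fin 4 → ℝ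
/-- Points of space `ℝ³`. -/
abbrev Sp : Type := Fin 3 → ℝ

/-- Space-time partial derivative `∂_a`. -/
def pd (a : Fin 4) (u : Pt → ℝ) : Pt → ℝ := fun X => fderiv ℝ u X (Pi.single a 1)

/-- Rotation field `Ω_{ij} = x_i ∂_j - x_j ∂_i` (space-time indices). -/
def rot (i j : Fin 4) (u : Pt → ℝ) : Pt → ℝ := fun X => X i * pd j u X - X j * pd i u X

/-- Scaling field `S = t ∂_t + x·∇_x = x^a ∂_a`. -/
def scal (u : Pt → ℝ) : Pt → ℝ := fun X => ∑ a, X a * pd a u X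

/-- The eight vector fields `Γ = (∂, Ω, S)`. -/
def Gam : Fin 8 → (Pt → ℝ) → Pt → ℝ :=
  ![pd 0, pd 1, pd 2, pd 3, rot 1 2, rot 1 3, rot 2 3, scal]

/-- `Γ^α` for a multi-index `α` (a word in the eight fields) of length `m`. -/
def GamComp : ∀ {m : ℕ}, (Fin m → Fin 8) → (Pt → ℝ) → Pt → ℝ
  | 0, _, u => u
  | _ + 1, α, u => Gam (α 0) (GamComp (fun i => α i.succ) u)

/-- Euclidean length `r = |x|` of a spatial point. -/
def rad (x : Sp) : ℝ := Real.sqrt (∑ i, (x i) ^ 2)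

/-- Japanese bracket `⟨z⟩ = (1+z²)^{1/2}`. -/
def jb (z : ℝ) : ℝ := Real.sqrt (1 + z ^ 2)

/-- Euclidean norm `|∂u|` of the space-time gradient. -/
def gradNorm (u : Pt → ℝ) (X : Pt) : ℝ := Real.sqrt (∑ a, (pd a u X) ^ 2)

/-- The unit-speed d'Alembertian `□ = ∂_t² - Δ_x`. -/
def box1 (u : Pt → ℝ) : Pt → ℝ := fun X =>
  pd 0 (pd 0 u) X - ∑ j : Fin 3, pd j.succ (pd j.succ u) X

/-- The d'Alembertian `∂_t² - c²Δ_x` with speed `c`. -/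
def boxc (c : ℝ) (u : Pt → ℝ) : Pt → ℝ := fun X =>
  pd 0 (pd 0 u) X - c ^ 2 * ∑ j : Fin 3, pd j.succ (pd j.succ u) X

/-! The fields `S` and `Ω` together with `□` determine `(t² - |x|²)Δh` algebraically from terms of
size `(t + |x|)(|Γh'| + (t + |x|)|□h|)`; dividing by `t + |x|` gives the Klainerman–Sideris bound
for `|t - |x|| |Δh|`. Away from the light cone `|t - |x||` is comparable to `t + |x|`, so there
`⟨t⟩Δh`, and then also `⟨t⟩∇∂_t h`, is bounded by the fields on the right-hand side. Multiply `h'`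
by a cutoff adapted to that region. The divergence and the curl of the truncated spatial gradient
are then controlled, the latter because second derivatives of `h` cancel in it, and in `L²` the
divergence and the curl control the full gradient. The Sobolev inequality `‖f‖_{L⁶} ≲ ‖∇f‖_{L²}` on
`ℝ³` concludes.
-/

section PartialDeriv

variable {ι : Type*} [DecidableEq ι]
variable {F : Type*} [NormedAddCommGroup F] [NormedSpace ℝ F]

/-- The partial derivative `∂_i f` of a function on `ℝ^ι`. For `ι = Fin 4` and real-valued `f` it
is definitionally `pd i f`; for `ι = Fin 3` it is used on time slices. -/
def partialDeriv (i : ι) (f : (ι → ℝ) → F) : (ι → ℝ) → F :=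
  fun x => fderiv ℝ f x (Pi.single i 1)

lemma contDiff_partialDeriv [Fintype ι] {m n : WithTop ℕ∞} {f : (ι → ℝ) → F} (hf : ContDiff ℝ n f)
    (hmn : m + 1 ≤ n) (i : ι) : ContDiff ℝ m (partialDeriv i f) :=
  (hf.fderiv_right hmn).clm_apply contDiff_const

lemma hasCompactSupport_partialDeriv {f : (ι → ℝ) → F} (hf : HasCompactSupport f) (i : ι) :
    HasCompactSupport (partialDeriv i f) :=
  hf.fderiv_apply (𝕜 := ℝ) _

lemma partialDeriv_comm [Fintype ι] {f : (ι → ℝ) → F} (hf : ContDiff ℝ 2 f) (i j : ι) (x : ι → ℝ) :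
    partialDeriv i (partialDeriv j f) x = partialDeriv j (partialDeriv i f) x := by
  have hsymm : IsSymmSndFDerivAt ℝ f x :=
    hf.contDiffAt.isSymmSndFDerivAt (by simp only [minSmoothness_of_isRCLikeNormedField, le_refl])
  have hdiff : DifferentiableAt ℝ (fderiv ℝ f) x :=
    (hf.fderiv_right (m := 1) (by norm_num)).differentiable (by norm_num) x
  have hsnd (k l : ι) : partialDeriv k (partialDeriv l f) x =
      fderiv ℝ (fderiv ℝ f) x (Pi.single k 1) (Pi.single l 1) := by
    unfold partialDeriv
    rw [fderiv_clm_apply hdiff (differentiableAt_const _)]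
    simp
  rw [hsnd, hsnd, hsymm.eq]

lemma partialDeriv_mul [Finite ι] {f g : (ι → ℝ) → ℝ} {x : ι → ℝ} (hf : DifferentiableAt ℝ f x)
    (hg : DifferentiableAt ℝ g x) (i : ι) :
    partialDeriv i (fun y => f y * g y) x =
      partialDeriv i f x * g x + f x * partialDeriv i g x := by
  cases nonempty_fintype ι
  simp only [partialDeriv, fderiv_fun_mul hf hg, add_apply,
    smul_apply, smul_eq_mul]
  ring

lemma contDiff_finCons {n : ℕ} {m : WithTop ℕ∞} (t : ℝ) :
    ContDiff ℝ m (fun x : Fin n → ℝ => (Fin.cons t x : Fin (n + 1) → ℝ)) :=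
  contDiff_pi.2 (Fin.cases (by simpa using contDiff_const)
    fun j => by simpa using contDiff_apply ℝ ℝ j)

lemma isClosedEmbedding_finCons {n : ℕ} (t : ℝ) :
    Topology.IsClosedEmbedding (fun x : Fin n → ℝ => (Fin.cons t x : Fin (n + 1) → ℝ)) :=
  Function.LeftInverse.isClosedEmbedding (f := fun (X : Fin (n + 1) → ℝ) j => X j.succ)
    (fun x => by ext j; simp) (by fun_prop) (contDiff_finCons (m := 0) t).continuous

lemma partialDeriv_comp_finCons {n : ℕ} {u : (Fin (n + 1) → ℝ) → F} {t : ℝ} {x : Fin n → ℝ}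
    (hu : DifferentiableAt ℝ u (Fin.cons t x)) (j : Fin n) :
    partialDeriv j (fun y : Fin n → ℝ => u (Fin.cons t y)) x =
      partialDeriv j.succ u (Fin.cons t x) := by
  have hcons : HasFDerivAt (fun y : Fin n → ℝ => (Fin.cons t y : Fin (n + 1) → ℝ)) _ x :=
    HasFDerivAt.finCons (F' := fun _ => ℝ) (φs := fun y => y) (hasFDerivAt_const t x)
      (hasFDerivAt_id (𝕜 := ℝ) x)
  have hcomp := (hu.hasFDerivAt.comp x hcons).fderiv
  simp only [partialDeriv]
  rw [show (fun y : Fin n → ℝ => u (Fin.cons t y)) = u ∘ fun y => Fin.cons t y from rfl, hcomp,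
    ContinuousLinearMap.comp_apply]
  congr 1
  refine funext (Fin.cases ?_ fun k => ?_)
  · simp
  · simp [Pi.single_apply]

end PartialDeriv

section DivCurl

variable {ι : Type*} [Fintype ι] [DecidableEq ι]

/-- The squared length `|∇f|²` of the gradient of a function on `ℝ^ι`. -/
def gradSq (f : (ι → ℝ) → ℝ) (x : ι → ℝ) : ℝ := ∑ j, partialDeriv j f x ^ 2

/-- The divergence of a vector field on `ℝ^ι`, given by its components. -/
def divergence (w : ι → (ι → ℝ) → ℝ) (x : ι → ℝ) : ℝ := ∑ i, partialDeriv i (w i) x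

/-- The squared length of the curl of a vector field on `ℝ^ι`, as half the sum over ordered pairs
of indices, so that for `ι = Fin 3` it is the usual `|∇ × w|²`. -/
def curlSq (w : ι → (ι → ℝ) → ℝ) (x : ι → ℝ) : ℝ :=
  (∑ i, ∑ j, (partialDeriv j (w i) x - partialDeriv i (w j) x) ^ 2) / 2

lemma gradSq_nonneg (f : (ι → ℝ) → ℝ) (x : ι → ℝ) : 0 ≤ gradSq f x :=
  Finset.sum_nonneg fun _ _ => sq_nonneg _

lemma curlSq_nonneg (w : ι → (ι → ℝ) → ℝ) (x : ι → ℝ) : 0 ≤ curlSq w x :=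
  div_nonneg (Finset.sum_nonneg fun _ _ => Finset.sum_nonneg fun _ _ => sq_nonneg _) zero_le_two

lemma integrable_partialDeriv_mul_partialDeriv {f g : (ι → ℝ) → ℝ} (hf : ContDiff ℝ 1 f)
    (hg : ContDiff ℝ 1 g) (hfs : HasCompactSupport f) (i j : ι) :
    Integrable (fun x => partialDeriv i f x * partialDeriv j g x) :=
  ((contDiff_partialDeriv (m := 0) hf (by norm_num) i).continuous.mul
    (contDiff_partialDeriv (m := 0) hg (by norm_num) j).continuous).integrable_of_hasCompactSupport
    (hasCompactSupport_partialDeriv hfs i).mul_right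

lemma integrable_gradSq {f : (ι → ℝ) → ℝ} (hf : ContDiff ℝ 1 f) (hfs : HasCompactSupport f) :
    Integrable (gradSq f) := by
  unfold gradSq
  simp_rw [pow_two]
  exact integrable_finsetSum _ fun j _ => integrable_partialDeriv_mul_partialDeriv hf hf hfs j j

lemma integral_mul_partialDeriv {f g : (ι → ℝ) → ℝ} (hf : ContDiff ℝ 1 f) (hg : ContDiff ℝ 1 g)
    (hfs : HasCompactSupport f) (i : ι) :
    ∫ x, f x * partialDeriv i g x = -∫ x, partialDeriv i f x * g x := by
  have hf' := (contDiff_partialDeriv (m := 0) hf (by norm_num) i).continuous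
  have hg' := (contDiff_partialDeriv (m := 0) hg (by norm_num) i).continuous
  refine integral_mul_fderiv_eq_neg_fderiv_mul_of_integrable
    ((hf'.mul hg.continuous).integrable_of_hasCompactSupport
      (hasCompactSupport_partialDeriv hfs i).mul_right)
    ((hf.continuous.mul hg').integrable_of_hasCompactSupport hfs.mul_right)
    ((hf.continuous.mul hg.continuous).integrable_of_hasCompactSupport hfs.mul_right)
    (fun x _ => hf.differentiable (by norm_num) x) (fun x _ => hg.differentiable (by norm_num) x)

lemma integral_partialDeriv_mul_partialDeriv_comm {f g : (ι → ℝ) → ℝ} (hf : ContDiff ℝ 1 f)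
    (hg : ContDiff ℝ 2 g) (hfs : HasCompactSupport f) (i j : ι) :
    ∫ x, partialDeriv i f x * partialDeriv j g x =
      ∫ x, partialDeriv j f x * partialDeriv i g x := by
  have hi := integral_mul_partialDeriv hf (contDiff_partialDeriv hg (by norm_num) j) hfs i
  have hj := integral_mul_partialDeriv hf (contDiff_partialDeriv hg (by norm_num) i) hfs j
  simp_rw [partialDeriv_comm hg i j] at hi
  exact neg_injective (hi.symm.trans hj)

lemma divergence_sq_add_curlSq (w : ι → (ι → ℝ) → ℝ) (x : ι → ℝ) :
    divergence w x ^ 2 + curlSq w x = ∑ i, gradSq (w i) x +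
      ∑ i, ∑ j, (partialDeriv i (w i) x * partialDeriv j (w j) x -
        partialDeriv j (w i) x * partialDeriv i (w j) x) := by
  have hcurl : ∑ i, ∑ j, (partialDeriv j (w i) x - partialDeriv i (w j) x) ^ 2 =
      2 * ∑ i, ∑ j, partialDeriv j (w i) x ^ 2 -
        2 * ∑ i, ∑ j, partialDeriv j (w i) x * partialDeriv i (w j) x := by
    have hexpand (i j : ι) : (partialDeriv j (w i) x - partialDeriv i (w j) x) ^ 2 =
        partialDeriv j (w i) x ^ 2 + partialDeriv i (w j) x ^ 2 -
          2 * (partialDeriv j (w i) x * partialDeriv i (w j) x) := by ring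
    simp_rw [hexpand, Finset.sum_sub_distrib, Finset.sum_add_distrib, ← Finset.mul_sum]
    rw [Finset.sum_comm (f := fun i j => partialDeriv i (w j) x ^ 2)]
    ring
  simp only [divergence, curlSq, gradSq, hcurl, pow_two (∑ i, partialDeriv i (w i) x),
    Finset.sum_mul_sum, Finset.sum_sub_distrib]
  ring

-- Integrating by parts twice, the terms `∂_i w_i ∂_j w_j - ∂_j w_i ∂_i w_j` integrate to zero.
theorem integral_sum_gradSq_eq_integral_divergence_sq_add_curlSq {w : ι → (ι → ℝ) → ℝ}
    (hw : ∀ i, ContDiff ℝ 2 (w i)) (hws : ∀ i, HasCompactSupport (w i)) :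
    ∫ x, ∑ i, gradSq (w i) x = ∫ x, (divergence w x ^ 2 + curlSq w x) := by
  have hw1 (i : ι) : ContDiff ℝ 1 (w i) := (hw i).of_le (by norm_num)
  have hint (i j k l : ι) : Integrable (fun x => partialDeriv i (w j) x * partialDeriv k (w l) x) :=
    integrable_partialDeriv_mul_partialDeriv (hw1 j) (hw1 l) (hws j) i k
  have hnull (i j : ι) : ∫ x, (partialDeriv i (w i) x * partialDeriv j (w j) x -
      partialDeriv j (w i) x * partialDeriv i (w j) x) = 0 := by
    rw [integral_sub (hint _ _ _ _) (hint _ _ _ _),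
      integral_partialDeriv_mul_partialDeriv_comm (hw1 i) (hw j) (hws i), sub_self]
  have hnull_int (i j : ι) : Integrable (fun x => partialDeriv i (w i) x * partialDeriv j (w j) x -
      partialDeriv j (w i) x * partialDeriv i (w j) x) := (hint i i j j).sub (hint j i i j)
  simp_rw [divergence_sq_add_curlSq]
  rw [integral_add (integrable_finsetSum _ fun i _ => integrable_gradSq (hw1 i) (hws i))
      (integrable_finsetSum _ fun i _ => integrable_finsetSum _ fun j _ => hnull_int i j),
    integral_finsetSum (f := fun i x => ∑ j, _) _
      fun i _ => integrable_finsetSum _ fun j _ => hnull_int i j]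
  simp_rw [integral_finsetSum _ fun j _ => hnull_int _ j, hnull, Finset.sum_const_zero, add_zero]

end DivCurl

section Sobolev

theorem exists_sobolev_six {E F : Type*} [NormedAddCommGroup E] [NormedSpace ℝ E]
    [FiniteDimensional ℝ E] [MeasurableSpace E] [BorelSpace E] (hE : Module.finrank ℝ E = 3)
    (μ : Measure E) [μ.IsAddHaarMeasure] [NormedAddCommGroup F] [InnerProductSpace ℝ F] :
    ∃ K : ℝ, 0 ≤ K ∧ ∀ f : E → F, ContDiff ℝ 1 f → HasCompactSupport f →
      (∫ x, ‖f x‖ ^ 6 ∂μ) ^ ((1 : ℝ) / 6) ≤ K * √(∫ x, ‖fderiv ℝ f x‖ ^ 2 ∂μ) := by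
  refine ⟨eLpNormLESNormFDerivOfEqInnerConst μ ((2 : NNReal) : ℝ), NNReal.coe_nonneg _,
    fun f hf hfs => ?_⟩
  have hf6 : MemLp f (6 : NNReal) μ := hf.continuous.memLp_of_hasCompactSupport hfs
  have hf2 : MemLp (fderiv ℝ f) (2 : NNReal) μ :=
    (hf.continuous_fderiv (by norm_num)).memLp_of_hasCompactSupport (hfs.fderiv (𝕜 := ℝ))
  have hsob := eLpNorm_le_eLpNorm_fderiv_of_eq_inner μ hf hfs (p := 2) (p' := 6)
    (by norm_num) (by simp [hE]) (by rw [hE]; norm_num)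
  rw [hf6.eLpNorm_eq_integral_rpow_norm (by simp) (by simp),
    hf2.eLpNorm_eq_integral_rpow_norm (by simp) (by simp),
    ← ENNReal.ofReal_coe_nnreal (p := eLpNormLESNormFDerivOfEqInnerConst μ _),
    ← ENNReal.ofReal_mul (NNReal.coe_nonneg _),
    ENNReal.ofReal_le_ofReal_iff (by positivity)] at hsob
  simpa [Real.sqrt_eq_rpow] using hsob

lemma norm_fderiv_sq_le_card_mul_sum {ι F : Type*} [Fintype ι] [DecidableEq ι]
    [NormedAddCommGroup F] [NormedSpace ℝ F] (f : (ι → ℝ) → F) (x : ι → ℝ) :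
    ‖fderiv ℝ f x‖ ^ 2 ≤ Fintype.card ι * ∑ j, ‖partialDeriv j f x‖ ^ 2 := by
  have hnorm : ‖fderiv ℝ f x‖ ≤ ∑ j, ‖partialDeriv j f x‖ := by
    refine ContinuousLinearMap.opNorm_le_bound _ (by positivity) fun y => ?_
    calc ‖fderiv ℝ f x y‖ = ‖∑ j, y j • partialDeriv j f x‖ := by
          conv_lhs => rw [pi_eq_sum_univ' y, map_sum]
          simp_rw [map_smul]
          rfl
      _ ≤ ∑ j, ‖y j‖ * ‖partialDeriv j f x‖ := by
          simpa only [norm_smul] using norm_sum_le Finset.univ fun j => y j • partialDeriv j f x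
      _ ≤ ∑ j, ‖y‖ * ‖partialDeriv j f x‖ := by gcongr with j; exact norm_le_pi_norm y j
      _ = (∑ j, ‖partialDeriv j f x‖) * ‖y‖ := by rw [← Finset.mul_sum, mul_comm]
  calc ‖fderiv ℝ f x‖ ^ 2 ≤ (∑ j, ‖partialDeriv j f x‖) ^ 2 := by gcongr
    _ ≤ _ := sq_sum_le_card_mul_sum_sq

lemma norm_partialDeriv_toLp_sq {ι κ : Type*} [Finite ι] [DecidableEq ι] [Fintype κ]
    {w : κ → (ι → ℝ) → ℝ} {x : ι → ℝ} (hw : ∀ a, DifferentiableAt ℝ (w a) x) (j : ι) :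
    ‖partialDeriv j (fun y => WithLp.toLp 2 fun a => w a y) x‖ ^ 2 =
      ∑ a, partialDeriv j (w a) x ^ 2 := by
  cases nonempty_fintype ι
  have hderiv : HasFDerivAt (fun y => WithLp.toLp 2 fun a => w a y)
      (((PiLp.continuousLinearEquiv 2 ℝ fun _ : κ => ℝ).symm : (κ → ℝ) →L[ℝ] _).comp
        (ContinuousLinearMap.pi fun a => fderiv ℝ (w a) x)) x :=
    (PiLp.continuousLinearEquiv 2 ℝ fun _ : κ => ℝ).symm.hasFDerivAt.comp x
      (hasFDerivAt_pi.2 fun a => (hw a).hasFDerivAt)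
  rw [partialDeriv, hderiv.fderiv, EuclideanSpace.norm_sq_eq]
  simp [partialDeriv]

theorem exists_sobolev_six_family (κ : Type*) [Fintype κ] :
    ∃ K : ℝ, 0 ≤ K ∧ ∀ w : κ → Sp → ℝ, (∀ a, ContDiff ℝ 1 (w a)) →
      (∀ a, HasCompactSupport (w a)) →
      (∫ x, (∑ a, w a x ^ 2) ^ 3) ^ ((1 : ℝ) / 6) ≤ K * √(∫ x, ∑ a, gradSq (w a) x) := by
  obtain ⟨K, hK, hsob⟩ := exists_sobolev_six (E := Sp) (F := EuclideanSpace ℝ κ) (by simp) volume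
  refine ⟨K * √3, by positivity, fun w hw hws => ?_⟩
  set f : Sp → EuclideanSpace ℝ κ := fun x => WithLp.toLp 2 fun a => w a x with hf
  have hf_smooth : ContDiff ℝ 1 f := contDiff_euclidean.2 hw
  have hf_supp : HasCompactSupport f :=
    .intro (isCompact_iUnion hws) fun x hx => by
      rw [Set.mem_iUnion, not_exists] at hx
      exact PiLp.ext fun a => (image_eq_zero_of_notMem_tsupport (hx a) : w a x = 0)
  have hnorm (x : Sp) : ‖f x‖ ^ 6 = (∑ a, w a x ^ 2) ^ 3 := by
    rw [show 6 = 2 * 3 from rfl, pow_mul, EuclideanSpace.norm_sq_eq]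
    simp [hf]
  have hgrad (x : Sp) : ‖fderiv ℝ f x‖ ^ 2 ≤ 3 * ∑ a, gradSq (w a) x := by
    refine (norm_fderiv_sq_le_card_mul_sum f x).trans_eq ?_
    simp_rw [hf, norm_partialDeriv_toLp_sq (fun a => (hw a).differentiable (by norm_num) x), gradSq]
    rw [Finset.sum_comm, Fintype.card_fin, Nat.cast_ofNat]
  have hint : Integrable fun x => ∑ a, gradSq (w a) x :=
    integrable_finsetSum _ fun a _ => integrable_gradSq (hw a) (hws a)
  calc (∫ x, (∑ a, w a x ^ 2) ^ 3) ^ ((1 : ℝ) / 6)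
      = (∫ x, ‖f x‖ ^ 6) ^ ((1 : ℝ) / 6) := by simp_rw [hnorm]
    _ ≤ K * √(∫ x, ‖fderiv ℝ f x‖ ^ 2) := hsob f hf_smooth hf_supp
    _ ≤ K * √(∫ x, 3 * ∑ a, gradSq (w a) x) := by
        refine mul_le_mul_of_nonneg_left (Real.sqrt_le_sqrt ?_) hK
        exact integral_mono_of_nonneg (.of_forall fun x => by positivity) (hint.const_mul 3)
          (.of_forall hgrad)
    _ = K * √3 * √(∫ x, ∑ a, gradSq (w a) x) := by
        rw [integral_const_mul, Real.sqrt_mul (by norm_num), mul_assoc]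

end Sobolev

section KlainermanSideris

variable {ι : Type*} [Fintype ι]

lemma abs_sum_le_card_mul {f : ι → ℝ} {M : ℝ} (hf : ∀ i, |f i| ≤ M) :
    |∑ i, f i| ≤ Fintype.card ι * M := by
  simpa using (Finset.abs_sum_le_sum_abs f _).trans
    (Finset.sum_le_card_nsmul Finset.univ _ M fun i _ => hf i)

/-- The numbers `utt`, `ut j`, `u i j` stand for the derivatives `∂_t²h`, `∂_t∂_jh`, `∂_i∂_jh` of
a function `h` at a point `(t,x)` with `t ≥ 0` and `|x| = r`. The bounds say that the derivatives
`∂_j∂_th`, `∂_j²h`, `S∂_ah`, `(x_i∂_j - x_j∂_i)∂_ih` and `(t + r)□h` are all at most `σ`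
in absolute value. -/
structure HessianBound (t : ℝ) (x : ι → ℝ) (r σ utt : ℝ) (ut : ι → ℝ) (u : ι → ι → ℝ) : Prop where
  time_nonneg : 0 ≤ t
  radius_nonneg : 0 ≤ r
  sum_sq_eq : ∑ i, x i ^ 2 = r ^ 2
  abs_mixed_le : ∀ j, |ut j| ≤ σ
  abs_diag_le : ∀ i, |u i i| ≤ σ
  abs_scaling_time_le : |t * utt + ∑ j, x j * ut j| ≤ σ
  abs_scaling_space_le : ∀ j, |t * ut j + ∑ i, x i * u i j| ≤ σ
  abs_rotation_le : ∀ i j, |x i * u i j - x j * u i i| ≤ σ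
  wave_le : (t + r) * |utt - ∑ i, u i i| ≤ σ

variable {t r σ utt : ℝ} {x ut : ι → ℝ} {u : ι → ι → ℝ}

lemma sq_sub_sq_mul_laplacian_eq (hx : ∑ i, x i ^ 2 = r ^ 2) :
    (t ^ 2 - r ^ 2) * ∑ i, u i i =
      t * (t * utt + ∑ j, x j * ut j) - ∑ j, x j * (t * ut j + ∑ i, x i * u i j)
        + ∑ j, ∑ i, x j * (x i * u i j - x j * u i i) - t ^ 2 * (utt - ∑ i, u i i) := by
  have hscal : ∑ j, x j * (t * ut j + ∑ i, x i * u i j) =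
      t * ∑ j, x j * ut j + ∑ j, ∑ i, x j * (x i * u i j) := by
    simp_rw [mul_add, Finset.sum_add_distrib, Finset.mul_sum]
    exact congrArg (· + _) (Finset.sum_congr rfl fun j _ => by ring)
  have hrot : ∑ j, ∑ i, x j * (x i * u i j - x j * u i i) =
      ∑ j, ∑ i, x j * (x i * u i j) - r ^ 2 * ∑ i, u i i := by
    simp_rw [← hx, Finset.sum_mul_sum, ← Finset.sum_sub_distrib]
    exact Finset.sum_congr rfl fun j _ => Finset.sum_congr rfl fun i _ => by ring
  rw [hscal, hrot]
  ring

namespace HessianBound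

variable (hb : HessianBound t x r σ utt ut u)
include hb

lemma abs_coord_le (i : ι) : |x i| ≤ r := by
  refine abs_le_of_sq_le_sq ?_ hb.radius_nonneg
  rw [← hb.sum_sq_eq]
  exact Finset.single_le_sum (f := fun i => x i ^ 2) (fun _ _ => sq_nonneg _) (Finset.mem_univ i)

lemma nonneg : 0 ≤ σ := (abs_nonneg _).trans hb.abs_scaling_time_le

lemma abs_laplacian_le : |∑ i, u i i| ≤ Fintype.card ι * σ :=
  abs_sum_le_card_mul hb.abs_diag_le

lemma abs_coord_mul_le {y : ℝ} (hy : |y| ≤ σ) (j : ι) : |x j * y| ≤ r * σ := by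
  rw [abs_mul]
  exact mul_le_mul (hb.abs_coord_le j) hy (abs_nonneg _) hb.radius_nonneg

lemma abs_sq_sub_sq_mul_laplacian_le :
    |(t ^ 2 - r ^ 2) * ∑ i, u i i| ≤
      (t + r) * (((Fintype.card ι : ℝ) ^ 2 + Fintype.card ι + 2) * σ) := by
  have ht := hb.time_nonneg
  have hscal_time : |t * (t * utt + ∑ j, x j * ut j)| ≤ t * σ := by
    rw [abs_mul, abs_of_nonneg ht]
    exact mul_le_mul_of_nonneg_left hb.abs_scaling_time_le ht
  have hscal_space : |∑ j, x j * (t * ut j + ∑ i, x i * u i j)| ≤ Fintype.card ι * (r * σ) :=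
    abs_sum_le_card_mul fun j => hb.abs_coord_mul_le (hb.abs_scaling_space_le j) j
  have hrot : |∑ j, ∑ i, x j * (x i * u i j - x j * u i i)| ≤
      Fintype.card ι * (Fintype.card ι * (r * σ)) :=
    abs_sum_le_card_mul fun j => abs_sum_le_card_mul fun i =>
      hb.abs_coord_mul_le (hb.abs_rotation_le i j) j
  have hwave : |t ^ 2 * (utt - ∑ i, u i i)| ≤ t * σ := by
    rw [abs_mul, abs_of_nonneg (sq_nonneg t), pow_two, mul_assoc]
    refine mul_le_mul_of_nonneg_left (le_trans ?_ hb.wave_le) ht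
    exact mul_le_mul_of_nonneg_right (le_add_of_nonneg_right hb.radius_nonneg) (abs_nonneg _)
  have hrσ : 0 ≤ r * σ := mul_nonneg hb.radius_nonneg hb.nonneg
  have htσ : 0 ≤ (Fintype.card ι ^ 2 + Fintype.card ι) * (t * σ) :=
    mul_nonneg (by positivity) (mul_nonneg ht hb.nonneg)
  rw [sq_sub_sq_mul_laplacian_eq hb.sum_sq_eq]
  refine ((abs_sub _ _).trans (add_le_add ((abs_add_le _ _).trans
    (add_le_add ((abs_sub _ _).trans (add_le_add hscal_time hscal_space)) hrot)) hwave)).trans ?_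
  linarith

lemma abs_sub_mul_abs_laplacian_le :
    |t - r| * |∑ i, u i i| ≤ ((Fintype.card ι : ℝ) ^ 2 + Fintype.card ι + 2) * σ := by
  have hσ := hb.nonneg
  rcases (add_nonneg hb.time_nonneg hb.radius_nonneg).eq_or_lt with hzero | hpos
  · rw [show t - r = 0 by linarith [hb.time_nonneg, hb.radius_nonneg], abs_zero, zero_mul]
    positivity
  · refine le_of_mul_le_mul_left ?_ hpos
    simpa only [sq_sub_sq, abs_mul, abs_of_pos hpos, mul_assoc] using
      hb.abs_sq_sub_sq_mul_laplacian_le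

lemma one_add_abs_sub_mul_abs_laplacian_le :
    (1 + |t - r|) * |∑ i, u i i| ≤ ((Fintype.card ι + 1) ^ 2 + 1) * σ := by
  linarith [hb.abs_laplacian_le, hb.abs_sub_mul_abs_laplacian_le]

variable {K : ℝ} (hK : t + r ≤ K * (1 + |t - r|))
include hK

lemma add_mul_abs_laplacian_le :
    (t + r) * |∑ i, u i i| ≤ K * (((Fintype.card ι + 1) ^ 2 + 1) * σ) := by
  have hK0 : 0 ≤ K := nonneg_of_mul_nonneg_left
    ((add_nonneg hb.time_nonneg hb.radius_nonneg).trans hK) (by positivity)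
  calc (t + r) * |∑ i, u i i| ≤ K * (1 + |t - r|) * |∑ i, u i i| := by gcongr
    _ = K * ((1 + |t - r|) * |∑ i, u i i|) := mul_assoc _ _ _
    _ ≤ _ := mul_le_mul_of_nonneg_left hb.one_add_abs_sub_mul_abs_laplacian_le hK0

lemma one_add_mul_abs_laplacian_le :
    (1 + t) * |∑ i, u i i| ≤
      (Fintype.card ι + K * ((Fintype.card ι + 1) ^ 2 + 1)) * σ := by
  have hr : 0 ≤ r * |∑ i, u i i| := mul_nonneg hb.radius_nonneg (abs_nonneg _)
  linarith [hb.abs_laplacian_le, hb.add_mul_abs_laplacian_le hK]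

lemma one_add_mul_abs_mixed_le (j : ι) :
    (1 + t) * |ut j| ≤ (Fintype.card ι + 2 + K * ((Fintype.card ι + 1) ^ 2 + 1)) * σ := by
  have hident : t * ut j = (t * ut j + ∑ i, x i * u i j) - x j * ∑ i, u i i -
      ∑ i, (x i * u i j - x j * u i i) := by
    rw [Finset.sum_sub_distrib, ← Finset.mul_sum]
    ring
  have hlap : |x j * ∑ i, u i i| ≤ K * (((Fintype.card ι + 1) ^ 2 + 1) * σ) := by
    rw [abs_mul]
    refine le_trans ?_ (hb.add_mul_abs_laplacian_le hK)
    gcongr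
    linarith [hb.abs_coord_le j, hb.time_nonneg]
  have hrot : |∑ i, (x i * u i j - x j * u i i)| ≤ Fintype.card ι * σ :=
    abs_sum_le_card_mul fun i => hb.abs_rotation_le i j
  have ht_mixed : t * |ut j| ≤
      σ + K * (((Fintype.card ι + 1) ^ 2 + 1) * σ) + Fintype.card ι * σ := by
    calc t * |ut j| = |t * ut j| := by rw [abs_mul, abs_of_nonneg hb.time_nonneg]
      _ ≤ _ := by
        rw [hident]
        exact (abs_sub _ _).trans (add_le_add ((abs_sub _ _).trans
          (add_le_add (hb.abs_scaling_space_le j) hlap)) hrot)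
  linarith [hb.abs_mixed_le j]

end HessianBound

end KlainermanSideris

section VectorFields

lemma gam_induction {P : ((Pt → ℝ) → Pt → ℝ) → Prop} (hpd : ∀ a, P (pd a))
    (hrot : ∀ i j, P (rot i j)) (hscal : P scal) (k : Fin 8) : P (Gam k) := by
  fin_cases k
  exacts [hpd 0, hpd 1, hpd 2, hpd 3, hrot 1 2, hrot 1 3, hrot 2 3, hscal]

lemma contDiff_gam {n : WithTop ℕ∞} {u : Pt → ℝ} (hu : ContDiff ℝ (n + 1) u) (k : Fin 8) :
    ContDiff ℝ n (Gam k u) := by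
  have hpd (a : Fin 4) : ContDiff ℝ n (pd a u) := contDiff_partialDeriv hu le_rfl a
  have hcoord (a : Fin 4) : ContDiff ℝ n fun X : Pt => X a := contDiff_apply ℝ ℝ a
  exact gam_induction (P := fun G => ContDiff ℝ n (G u)) hpd
    (fun i j => ((hcoord i).mul (hpd j)).sub ((hcoord j).mul (hpd i)))
    (ContDiff.sum fun a _ => (hcoord a).mul (hpd a)) k

lemma hasCompactSupport_gam {u : Pt → ℝ} (hu : HasCompactSupport u) (k : Fin 8) :
    HasCompactSupport (Gam k u) := by
  refine (hu.fderiv (𝕜 := ℝ)).mono (Function.support_subset_iff'.2 fun X hX => ?_)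
  have hpd (a : Fin 4) : pd a u X = 0 := by
    rw [pd, Function.notMem_support.1 hX, zero_apply]
  exact gam_induction (P := fun G => G u X = 0) hpd (by simp [rot, hpd]) (by simp [scal, hpd]) k

lemma contDiff_gamComp {n : WithTop ℕ∞} {u : Pt → ℝ} :
    ∀ {m : ℕ} (α : Fin m → Fin 8), ContDiff ℝ (n + m) u → ContDiff ℝ n (GamComp α u)
  | 0, _, hu => by simpa [GamComp] using hu
  | m + 1, α, hu => contDiff_gam (contDiff_gamComp (fun i => α i.succ)
      (by rwa [add_right_comm, add_assoc, ← Nat.cast_succ])) (α 0)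

lemma hasCompactSupport_gamComp {u : Pt → ℝ} (hu : HasCompactSupport u) :
    ∀ {m : ℕ} (α : Fin m → Fin 8), HasCompactSupport (GamComp α u)
  | 0, _ => hu
  | _ + 1, α => hasCompactSupport_gam (hasCompactSupport_gamComp hu fun i => α i.succ) (α 0)

lemma continuous_box1 {u : Pt → ℝ} (hu : ContDiff ℝ 2 u) : Continuous (box1 u) := by
  have hpd (a : Fin 4) : Continuous (pd a (pd a u)) :=
    (contDiff_partialDeriv (m := 0) (contDiff_partialDeriv (m := 1) hu (by norm_num) a)
      (by norm_num) a).continuous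
  exact (hpd 0).sub (continuous_finsetSum _ fun j _ => hpd j.succ)

lemma hasCompactSupport_box1 {u : Pt → ℝ} (hu : HasCompactSupport u) :
    HasCompactSupport (box1 u) := by
  refine .intro' hu (isClosed_tsupport u) fun X hX => ?_
  have hpd (a : Fin 4) : pd a (pd a u) X = 0 := by
    have hsub : tsupport (pd a (pd a u)) ⊆ tsupport u :=
      (tsupport_fderiv_apply_subset ℝ _).trans (tsupport_fderiv_apply_subset ℝ _)
    exact image_eq_zero_of_notMem_tsupport fun h => hX (hsub h)
  simp [box1, hpd]

lemma exists_abs_rot_le_abs_gam (i j : Fin 3) (u : Pt → ℝ) (X : Pt) :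
    ∃ k, |rot i.succ j.succ u X| ≤ |Gam k u X| := by
  have hself (i : Fin 4) : |rot i i u X| ≤ |Gam 0 u X| := by simp [rot]
  have hswap (i j : Fin 4) : |rot j i u X| ≤ |rot i j u X| := (abs_sub_comm _ _).le
  fin_cases i <;> fin_cases j
  exacts [⟨0, hself 1⟩, ⟨4, le_rfl⟩, ⟨5, le_rfl⟩, ⟨4, hswap 1 2⟩, ⟨0, hself 2⟩, ⟨6, le_rfl⟩,
    ⟨5, hswap 1 3⟩, ⟨6, hswap 2 3⟩, ⟨0, hself 3⟩]

end VectorFields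

section GammaDensity

lemma continuous_rad : Continuous rad := by unfold rad; fun_prop

/-- The bracket `∑_{|α|≤1} ‖Γ^α h'(t,·)‖₂ + ‖⟨t+r⟩ □h(t,·)‖₂` of the estimate. -/
def gammaNorm (h : Pt → ℝ) (t : ℝ) : ℝ :=
  ∑ m ∈ Finset.range 2, ∑ α : Fin m → Fin 8,
      (∫ x : Sp, ∑ a, (GamComp α (pd a h) (Fin.cons t x)) ^ 2) ^ ((1 : ℝ) / 2)
    + (∫ x : Sp, jb (t + rad x) ^ 2 * (box1 h (Fin.cons t x)) ^ 2) ^ ((1 : ℝ) / 2)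

/-- The sum of the squares whose `L²` norms make up `gammaNorm`, at the point `(t,x)`. -/
def gammaDensity (h : Pt → ℝ) (t : ℝ) (x : Sp) : ℝ :=
  ∑ m ∈ Finset.range 2, ∑ α : Fin m → Fin 8, ∑ a, (GamComp α (pd a h) (Fin.cons t x)) ^ 2
    + jb (t + rad x) ^ 2 * (box1 h (Fin.cons t x)) ^ 2

lemma gammaNorm_nonneg (h : Pt → ℝ) (t : ℝ) : 0 ≤ gammaNorm h t := by
  unfold gammaNorm; positivity

lemma gammaDensity_nonneg (h : Pt → ℝ) (t : ℝ) (x : Sp) : 0 ≤ gammaDensity h t x := by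
  unfold gammaDensity; positivity

lemma integrable_gamComp_sq {u : Pt → ℝ} (hu : HasCompactSupport u) {m : ℕ} (α : Fin m → Fin 8)
    (huc : ContDiff ℝ m u) (t : ℝ) :
    Integrable fun x : Sp => GamComp α u (Fin.cons t x) ^ 2 := by
  have hcont : Continuous (GamComp α u) := (contDiff_gamComp (n := 0) α (by simpa)).continuous
  simp_rw [pow_two]
  exact (hcont.mul hcont |>.comp (isClosedEmbedding_finCons t).continuous)
    |>.integrable_of_hasCompactSupport
    ((hasCompactSupport_gamComp hu α).mul_right.comp_isClosedEmbedding
      (isClosedEmbedding_finCons t))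

lemma integrable_sum_gamComp_sq {h : Pt → ℝ} (hh : ContDiff ℝ 3 h) (hs : HasCompactSupport h)
    {m : ℕ} (hm : m ∈ Finset.range 2) (α : Fin m → Fin 8) (t : ℝ) :
    Integrable fun x : Sp => ∑ a, (GamComp α (pd a h) (Fin.cons t x)) ^ 2 := by
  have hm2 : (m : WithTop ℕ∞) + 1 ≤ 3 := by
    exact_mod_cast (show m + 1 ≤ 3 by have := Finset.mem_range.1 hm; omega)
  exact integrable_finsetSum _ fun a _ => integrable_gamComp_sq
    (hasCompactSupport_partialDeriv hs a) α (contDiff_partialDeriv hh hm2 a) t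

lemma integrable_jb_sq_mul_box1_sq {h : Pt → ℝ} (hh : ContDiff ℝ 2 h) (hs : HasCompactSupport h)
    (t : ℝ) :
    Integrable fun x : Sp => jb (t + rad x) ^ 2 * (box1 h (Fin.cons t x)) ^ 2 := by
  have hjb : Continuous fun x : Sp => jb (t + rad x) ^ 2 := by
    have := continuous_rad
    unfold jb
    fun_prop
  have hbox := (continuous_box1 hh).comp (isClosedEmbedding_finCons (n := 3) t).continuous
  have hbox_supp := (hasCompactSupport_box1 hs).comp_isClosedEmbedding
    (isClosedEmbedding_finCons (n := 3) t)
  simp_rw [pow_two (box1 h _)]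
  exact (hjb.mul (hbox.mul hbox)).integrable_of_hasCompactSupport hbox_supp.mul_right.mul_left

lemma integrable_gammaDensity {h : Pt → ℝ} (hh : ContDiff ℝ 3 h) (hs : HasCompactSupport h)
    (t : ℝ) : Integrable (gammaDensity h t) :=
  (integrable_finsetSum _ fun _ hm => integrable_finsetSum _ fun α _ =>
    integrable_sum_gamComp_sq hh hs hm α t).add
    (integrable_jb_sq_mul_box1_sq (hh.of_le (by norm_num)) hs t)

lemma sqrt_add_le_add_sqrt (a b : ℝ) : √(a + b) ≤ √a + √b := by
  have hle (c : ℝ) : c ≤ √c ^ 2 := (Real.sqrt_le_iff.1 le_rfl).2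
  exact Real.sqrt_le_iff.2 ⟨by positivity, by
    nlinarith [hle a, hle b, mul_nonneg (Real.sqrt_nonneg a) (Real.sqrt_nonneg b)]⟩

lemma sqrt_sum_le_sum_sqrt {ι : Type*} (s : Finset ι) (f : ι → ℝ) :
    √(∑ i ∈ s, f i) ≤ ∑ i ∈ s, √(f i) :=
  Finset.le_sum_of_subadditive _ Real.sqrt_zero.le sqrt_add_le_add_sqrt _ _

lemma sqrt_integral_gammaDensity_le {h : Pt → ℝ} (hh : ContDiff ℝ 3 h)
    (hs : HasCompactSupport h) (t : ℝ) : √(∫ x, gammaDensity h t x) ≤ gammaNorm h t := by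
  have hint {m : ℕ} (hm : m ∈ Finset.range 2) (α : Fin m → Fin 8) :=
    integrable_sum_gamComp_sq hh hs hm α t
  have hbox := integrable_jb_sq_mul_box1_sq (hh.of_le (by norm_num)) hs t
  have hsplit : ∫ x, gammaDensity h t x =
      ∑ m ∈ Finset.range 2, ∑ α : Fin m → Fin 8,
          (∫ x : Sp, ∑ a, (GamComp α (pd a h) (Fin.cons t x)) ^ 2)
        + ∫ x : Sp, jb (t + rad x) ^ 2 * (box1 h (Fin.cons t x)) ^ 2 := by
    unfold gammaDensity
    rw [integral_add (integrable_finsetSum _ fun _ hm => integrable_finsetSum _ fun α _ =>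
      hint hm α) hbox, integral_finsetSum _ fun _ hm => integrable_finsetSum _ fun α _ => hint hm α]
    congr 1
    exact Finset.sum_congr rfl fun m hm => integral_finsetSum _ fun α _ => hint hm α
  simp_rw [hsplit, gammaNorm, ← Real.sqrt_eq_rpow]
  refine (sqrt_add_le_add_sqrt _ _).trans (add_le_add_left ?_ _)
  exact (sqrt_sum_le_sum_sqrt _ _).trans (Finset.sum_le_sum fun m _ => sqrt_sum_le_sum_sqrt _ _)

lemma abs_le_sqrt_gammaDensity {h : Pt → ℝ} {t : ℝ} {x : Sp} {m : ℕ} (hm : m ∈ Finset.range 2)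
    (α : Fin m → Fin 8) (a : Fin 4) :
    |GamComp α (pd a h) (Fin.cons t x)| ≤ √(gammaDensity h t x) := by
  refine Real.abs_le_sqrt ?_
  calc (GamComp α (pd a h) (Fin.cons t x)) ^ 2
      ≤ ∑ a, (GamComp α (pd a h) (Fin.cons t x)) ^ 2 :=
        Finset.single_le_sum (f := fun a => (GamComp α (pd a h) (Fin.cons t x)) ^ 2)
          (fun _ _ => sq_nonneg _) (Finset.mem_univ a)
    _ ≤ ∑ α : Fin m → Fin 8, ∑ a, (GamComp α (pd a h) (Fin.cons t x)) ^ 2 :=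
        Finset.single_le_sum
          (f := fun α : Fin m → Fin 8 => ∑ a, (GamComp α (pd a h) (Fin.cons t x)) ^ 2)
          (fun _ _ => by positivity) (Finset.mem_univ α)
    _ ≤ ∑ m ∈ Finset.range 2, ∑ α : Fin m → Fin 8,
          ∑ a, (GamComp α (pd a h) (Fin.cons t x)) ^ 2 :=
        Finset.single_le_sum (f := fun m : ℕ => ∑ α : Fin m → Fin 8,
          ∑ a, (GamComp α (pd a h) (Fin.cons t x)) ^ 2) (fun _ _ => by positivity) hm
    _ ≤ gammaDensity h t x := le_add_of_nonneg_right (by positivity)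

lemma abs_pd_le_sqrt_gammaDensity (h : Pt → ℝ) (t : ℝ) (x : Sp) (a : Fin 4) :
    |pd a h (Fin.cons t x)| ≤ √(gammaDensity h t x) :=
  abs_le_sqrt_gammaDensity (m := 0) (by simp) ![] a

lemma abs_gam_pd_le_sqrt_gammaDensity (h : Pt → ℝ) (t : ℝ) (x : Sp) (k : Fin 8) (a : Fin 4) :
    |Gam k (pd a h) (Fin.cons t x)| ≤ √(gammaDensity h t x) :=
  abs_le_sqrt_gammaDensity (m := 1) (by simp) ![k] a

lemma mul_abs_box1_le_sqrt_gammaDensity (h : Pt → ℝ) (t : ℝ) (x : Sp) :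
    (t + rad x) * |box1 h (Fin.cons t x)| ≤ √(gammaDensity h t x) := by
  refine Real.le_sqrt_of_sq_le ?_
  calc ((t + rad x) * |box1 h (Fin.cons t x)|) ^ 2
      ≤ jb (t + rad x) ^ 2 * box1 h (Fin.cons t x) ^ 2 := by
        rw [mul_pow, sq_abs, jb, Real.sq_sqrt (by positivity)]
        gcongr
        linarith
    _ ≤ gammaDensity h t x := le_add_of_nonneg_left (by positivity)

end GammaDensity

section ConeCutoff

lemma rad_eq_norm (x : Sp) : rad x = ‖(WithLp.toLp 2 x : EuclideanSpace ℝ (Fin 3))‖ := by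
  simp [rad, EuclideanSpace.norm_eq]

lemma rad_smul (c : ℝ) (x : Sp) : rad (c • x) = |c| * rad x := by
  rw [rad_eq_norm, rad_eq_norm, WithLp.toLp_smul, norm_smul, Real.norm_eq_abs]

lemma norm_le_rad (x : Sp) : ‖x‖ ≤ rad x := by
  rw [rad_eq_norm, pi_norm_le_iff_of_nonneg (norm_nonneg _)]
  exact fun i => PiLp.norm_apply_le (WithLp.toLp 2 x : EuclideanSpace ℝ (Fin 3)) i

lemma exists_contDiff_shell_cutoff {δ : ℝ} (hδ : 0 < δ) :
    ∃ ψ : Sp → ℝ, ContDiff ℝ (⊤ : ℕ∞) ψ ∧ HasCompactSupport ψ ∧ (∀ x, ψ x ∈ Set.Icc 0 1) ∧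
      (∀ x, δ ≤ |rad x - 1| → ψ x = 0) ∧ ∀ x, |rad x - 1| ≤ δ / 2 → ψ x = 1 := by
  have hcont : Continuous fun x => |rad x - 1| := (continuous_rad.sub continuous_const).abs
  have hdisj : Disjoint {x : Sp | δ ≤ |rad x - 1|} {x | |rad x - 1| ≤ δ / 2} :=
    Set.disjoint_left.2 fun x (hfar : δ ≤ |rad x - 1|) (hnear : |rad x - 1| ≤ δ / 2) => by linarith
  obtain ⟨ψ, hzero, hone, hIcc⟩ := exists_contMDiffMap_zero_one_of_isClosed (n := (⊤ : ℕ∞))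
    (modelWithCornersSelf ℝ Sp) (isClosed_le continuous_const hcont)
    (isClosed_le hcont continuous_const) hdisj
  refine ⟨ψ, ψ.contMDiff.contDiff, ?_, hIcc, fun x hx => hzero hx, fun x hx => hone hx⟩
  refine .intro (isCompact_closedBall (0 : Sp) (1 + δ)) fun x hx => hzero ?_
  change δ ≤ |rad x - 1|
  have hfar : 1 + δ < rad x := lt_of_lt_of_le (by simpa using hx) (norm_le_rad x)
  exact le_abs.2 (.inl (by linarith))

/-- `χ` is a `C²` cutoff which is `1` off the shell `(1-δ)t ≤ |x| ≤ (1+δ)t`, lives where `t + |x|`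
and `1 + |t - |x||` are comparable, and has derivatives of size `1/(1+t)`, all with constant `K`. -/
structure IsConeCutoff (δ K t : ℝ) (χ : Sp → ℝ) : Prop where
  contDiff : ContDiff ℝ 2 χ
  mem_Icc : ∀ x, χ x ∈ Set.Icc 0 1
  eq_one : ∀ x, rad x ∉ Set.Icc ((1 - δ) * t) ((1 + δ) * t) → χ x = 1
  add_rad_le : ∀ x, χ x ≠ 0 → t + rad x ≤ K * (1 + |t - rad x|)
  abs_partialDeriv_le : ∀ j x, (1 + t) * |partialDeriv j χ x| ≤ K

lemma isConeCutoff_one (δ : ℝ) {K t : ℝ} (hK : 2 ≤ K) (ht : t ≤ 1) :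
    IsConeCutoff δ K t fun _ => 1 where
  contDiff := contDiff_const
  mem_Icc _ := by simp
  eq_one _ _ := rfl
  add_rad_le x _ := by nlinarith [neg_abs_le (t - rad x), abs_nonneg (t - rad x)]
  abs_partialDeriv_le j x := by
    simp only [partialDeriv, fderiv_fun_const, Pi.zero_apply, zero_apply, abs_zero, mul_zero]
    linarith

lemma partialDeriv_one_sub_comp_smul {f : Sp → ℝ} (c : ℝ) (j : Fin 3) (x : Sp) :
    partialDeriv j (fun y => 1 - f (c • y)) x = -(c * partialDeriv j f (c • x)) := by
  simp [partialDeriv, fderiv_const_sub, fderiv_comp_smul]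

lemma isConeCutoff_one_sub_comp_smul {δ K M t : ℝ} {ψ : Sp → ℝ} (hδ : 0 < δ) (ht : 1 < t)
    (hψ : ContDiff ℝ 2 ψ) (hIcc : ∀ x, ψ x ∈ Set.Icc 0 1)
    (hzero : ∀ x, δ ≤ |rad x - 1| → ψ x = 0) (hone : ∀ x, |rad x - 1| ≤ δ / 2 → ψ x = 1)
    (hM : ∀ j x, |partialDeriv j ψ x| ≤ M) (hMK : 2 * M ≤ K) (hδK : 4 / δ + 1 ≤ K) :
    IsConeCutoff δ K t fun x => 1 - ψ (t⁻¹ • x) := by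
  have ht0 : 0 < t := one_pos.trans ht
  have hrad (x : Sp) : |rad (t⁻¹ • x) - 1| = |t - rad x| / t := by
    rw [rad_smul, abs_of_pos (inv_pos.2 ht0), abs_sub_comm,
      show 1 - t⁻¹ * rad x = (t - rad x) / t by field_simp, abs_div, abs_of_pos ht0]
  refine ⟨contDiff_const.sub (hψ.comp (contDiff_const_smul _)), fun x => ?_, fun x hx => ?_,
    fun x hx => ?_, fun j x => ?_⟩
  · have := hIcc (t⁻¹ • x)
    exact ⟨by linarith [this.2], by linarith [this.1]⟩
  · have hfar : δ * t ≤ |t - rad x| := by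
      by_contra! hlt
      exact hx ⟨by linarith [(abs_lt.1 hlt).2], by linarith [(abs_lt.1 hlt).1]⟩
    rw [hzero _ (by rwa [hrad, le_div_iff₀ ht0]), sub_zero]
  · have hfar : δ / 2 < |t - rad x| / t := by
      by_contra! hle
      exact hx (by rw [hone _ (by rwa [hrad]), sub_self])
    rw [lt_div_iff₀ ht0] at hfar
    have h2t : 2 * t ≤ 4 / δ * |t - rad x| := by
      rw [div_mul_eq_mul_div, le_div_iff₀ hδ]
      linarith
    have hδK' : (4 / δ + 1) * |t - rad x| ≤ K * |t - rad x| := by gcongr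
    have hK : 0 ≤ K := le_trans (by positivity) hδK
    linarith [neg_abs_le (t - rad x)]
  · rw [partialDeriv_one_sub_comp_smul, abs_neg, abs_mul, abs_of_pos (inv_pos.2 ht0)]
    calc (1 + t) * (t⁻¹ * |partialDeriv j ψ (t⁻¹ • x)|)
        ≤ (t + t) * (t⁻¹ * M) := by gcongr; exact hM j _
      _ = 2 * M := by field_simp; ring
      _ ≤ K := hMK

lemma exists_isConeCutoff {δ : ℝ} (hδ : 0 < δ) :
    ∃ K : ℝ, ∀ t, ∃ χ, IsConeCutoff δ K t χ := by
  obtain ⟨ψ, hψ, hψs, hIcc, hzero, hone⟩ := exists_contDiff_shell_cutoff hδ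
  have hψ2 : ContDiff ℝ 2 ψ := by exact_mod_cast contDiff_infty.1 hψ 2
  have hbound (j : Fin 3) : ∃ M, ∀ x, |partialDeriv j ψ x| ≤ M :=
    (hasCompactSupport_partialDeriv hψs j).exists_bound_of_continuous
      (contDiff_partialDeriv (m := 1) hψ2 (by norm_num) j).continuous
  choose M hM using hbound
  have hM0 (j : Fin 3) : 0 ≤ M j := (abs_nonneg _).trans (hM j 0)
  have hMsum (j : Fin 3) (x : Sp) : |partialDeriv j ψ x| ≤ ∑ j, M j :=
    (hM j x).trans (Finset.single_le_sum (fun j _ => hM0 j) (Finset.mem_univ j))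
  have hsum : 0 ≤ ∑ j, M j := Finset.sum_nonneg fun j _ => hM0 j
  have hδ4 : 0 < 4 / δ := by positivity
  refine ⟨2 * ∑ j, M j + 4 / δ + 2, fun t => ?_⟩
  rcases le_or_gt t 1 with ht | ht
  · exact ⟨_, isConeCutoff_one δ (by linarith) ht⟩
  · exact ⟨_, isConeCutoff_one_sub_comp_smul hδ ht hψ2 hIcc hzero hone hMsum (by linarith)
      (by linarith)⟩

end ConeCutoff

section TruncatedGradient

lemma exists_gam_eq_pd (a : Fin 4) : ∃ k, Gam k = pd a := by
  fin_cases a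
  exacts [⟨0, rfl⟩, ⟨1, rfl⟩, ⟨2, rfl⟩, ⟨3, rfl⟩]

lemma scal_cons (u : Pt → ℝ) (t : ℝ) (x : Sp) :
    scal u (Fin.cons t x) =
      t * pd 0 u (Fin.cons t x) + ∑ j : Fin 3, x j * pd j.succ u (Fin.cons t x) := by
  simp [scal, Fin.sum_univ_succ]

lemma hessianBound_sqrt_gammaDensity {h : Pt → ℝ} (hh : ContDiff ℝ 2 h) {t : ℝ} (ht : 0 ≤ t)
    (x : Sp) :
    HessianBound t x (rad x) √(gammaDensity h t x) (pd 0 (pd 0 h) (Fin.cons t x))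
      (fun j => pd j.succ (pd 0 h) (Fin.cons t x))
      (fun i j => pd j.succ (pd i.succ h) (Fin.cons t x)) := by
  have hgam := abs_gam_pd_le_sqrt_gammaDensity h t x
  have hpd (a b : Fin 4) : |pd a (pd b h) (Fin.cons t x)| ≤ √(gammaDensity h t x) := by
    obtain ⟨k, hk⟩ := exists_gam_eq_pd a
    exact hk ▸ hgam k b
  have hscal (a : Fin 4) : |scal (pd a h) (Fin.cons t x)| ≤ √(gammaDensity h t x) := hgam 7 a
  have hcomm (a b : Fin 4) : pd a (pd b h) (Fin.cons t x) = pd b (pd a h) (Fin.cons t x) :=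
    partialDeriv_comm hh a b _
  refine ⟨ht, Real.sqrt_nonneg _, (Real.sq_sqrt (by positivity)).symm, fun j => hpd _ _,
    fun i => hpd _ _, ?_, fun j => ?_, fun i j => ?_, mul_abs_box1_le_sqrt_gammaDensity h t x⟩
  · simpa only [scal_cons] using hscal 0
  · simpa only [scal_cons, hcomm _ j.succ] using hscal j.succ
  · obtain ⟨k, hk⟩ := exists_abs_rot_le_abs_gam i j (pd i.succ h) (Fin.cons t x)
    simpa only [rot, Fin.cons_succ] using hk.trans (hgam k i.succ)

/-- The component `χ ∂_a h(t,·)` of the cut-off space-time gradient on the time slice `t`. -/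
def truncatedGrad (χ : Sp → ℝ) (h : Pt → ℝ) (t : ℝ) (a : Fin 4) (x : Sp) : ℝ :=
  χ x * pd a h (Fin.cons t x)

lemma contDiff_truncatedGrad {m n : WithTop ℕ∞} {χ : Sp → ℝ} {h : Pt → ℝ} (hχ : ContDiff ℝ m χ)
    (hh : ContDiff ℝ n h) (hmn : m + 1 ≤ n) (t : ℝ) (a : Fin 4) :
    ContDiff ℝ m (truncatedGrad χ h t a) :=
  hχ.mul ((contDiff_partialDeriv hh hmn a).comp (contDiff_finCons t))

lemma hasCompactSupport_truncatedGrad (χ : Sp → ℝ) {h : Pt → ℝ} (hs : HasCompactSupport h)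
    (t : ℝ) (a : Fin 4) : HasCompactSupport (truncatedGrad χ h t a) :=
  ((hasCompactSupport_partialDeriv hs a).comp_isClosedEmbedding
    (isClosedEmbedding_finCons t)).mul_left

lemma partialDeriv_truncatedGrad {χ : Sp → ℝ} {h : Pt → ℝ} (hχ : Differentiable ℝ χ)
    (hh : ContDiff ℝ 2 h) (t : ℝ) (a : Fin 4) (j : Fin 3) (x : Sp) :
    partialDeriv j (truncatedGrad χ h t a) x =
      partialDeriv j χ x * pd a h (Fin.cons t x) + χ x * pd j.succ (pd a h) (Fin.cons t x) := by
  have hpd : ContDiff ℝ 1 (pd a h) := contDiff_partialDeriv hh (by norm_num) a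
  have hslice : Differentiable ℝ fun y : Sp => pd a h (Fin.cons t y) :=
    (hpd.comp (contDiff_finCons t)).differentiable (by norm_num)
  rw [show truncatedGrad χ h t a = fun y => χ y * pd a h (Fin.cons t y) from rfl,
    partialDeriv_mul (hχ x) (hslice x),
    partialDeriv_comp_finCons (hpd.differentiable (by norm_num) _)]
  rfl

lemma sq_mul_sq_le_of_mul_abs_le {s y c q : ℝ} (hs : 0 ≤ s) (hq : 0 ≤ q)
    (hy : s * |y| ≤ c * √q) : s ^ 2 * y ^ 2 ≤ c ^ 2 * q := by
  simpa only [mul_pow, sq_abs, Real.sq_sqrt hq] using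
    pow_le_pow_left₀ (mul_nonneg hs (abs_nonneg y)) hy 2

namespace IsConeCutoff

variable {δ K t : ℝ} {χ : Sp → ℝ} (hχ : IsConeCutoff δ K t χ)
include hχ

lemma one_add_mul_abs_mul_le {x : Sp} {y B : ℝ} (hB : 0 ≤ B)
    (hy : χ x ≠ 0 → (1 + t) * |y| ≤ B) : (1 + t) * |χ x * y| ≤ B := by
  obtain ⟨h0, h1⟩ := hχ.mem_Icc x
  rcases eq_or_ne (χ x) 0 with hzero | hne
  · simpa [hzero] using hB
  · calc (1 + t) * |χ x * y| = χ x * ((1 + t) * |y|) := by rw [abs_mul, abs_of_nonneg h0]; ring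
      _ ≤ χ x * B := mul_le_mul_of_nonneg_left (hy hne) h0
      _ ≤ B := mul_le_of_le_one_left hB h1

lemma differentiable : Differentiable ℝ χ := hχ.contDiff.differentiable (by norm_num)

variable (ht : 0 ≤ t)
include ht

lemma nonneg : 0 ≤ K :=
  (mul_nonneg (by linarith) (abs_nonneg _)).trans (hχ.abs_partialDeriv_le 0 0)

lemma one_add_mul_abs_partialDeriv_mul_le {y σ : ℝ} (hy : |y| ≤ σ) (j : Fin 3) (x : Sp) :
    (1 + t) * |partialDeriv j χ x * y| ≤ K * σ := by
  rw [abs_mul, ← mul_assoc]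
  exact mul_le_mul (hχ.abs_partialDeriv_le j x) hy (abs_nonneg _) (hχ.nonneg ht)

variable {h : Pt → ℝ} (hh : ContDiff ℝ 2 h)
include hh

lemma one_add_mul_abs_partialDeriv_truncatedGrad_zero_le (j : Fin 3) (x : Sp) :
    (1 + t) * |partialDeriv j (truncatedGrad χ h t 0) x| ≤
      (18 * K + 5) * √(gammaDensity h t x) := by
  have hK := hχ.nonneg ht
  have hchi := hχ.one_add_mul_abs_partialDeriv_mul_le ht
    (abs_pd_le_sqrt_gammaDensity h t x 0) j x
  have hmixed : (1 + t) * |χ x * pd j.succ (pd 0 h) (Fin.cons t x)| ≤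
      (17 * K + 5) * √(gammaDensity h t x) :=
    hχ.one_add_mul_abs_mul_le (by positivity) fun hne =>
      ((hessianBound_sqrt_gammaDensity hh ht x).one_add_mul_abs_mixed_le
        (hχ.add_rad_le x hne) j).trans_eq (by rw [Fintype.card_fin]; ring)
  rw [partialDeriv_truncatedGrad hχ.differentiable hh]
  calc _ ≤ (1 + t) * (|_| + |_|) := mul_le_mul_of_nonneg_left (abs_add_le _ _) (by linarith)
    _ ≤ _ := by linarith

lemma one_add_mul_abs_divergence_truncatedGrad_le (x : Sp) :
    (1 + t) * |divergence (fun i : Fin 3 => truncatedGrad χ h t i.succ) x| ≤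
      (20 * K + 3) * √(gammaDensity h t x) := by
  have hK := hχ.nonneg ht
  have hchi (i : Fin 3) : |(1 + t) * (partialDeriv i χ x * pd i.succ h (Fin.cons t x))| ≤
      K * √(gammaDensity h t x) := by
    rw [abs_mul, abs_of_nonneg (by linarith : 0 ≤ 1 + t)]
    exact hχ.one_add_mul_abs_partialDeriv_mul_le ht (abs_pd_le_sqrt_gammaDensity h t x _) i x
  have hlap : (1 + t) * |χ x * ∑ i : Fin 3, pd i.succ (pd i.succ h) (Fin.cons t x)| ≤
      (17 * K + 3) * √(gammaDensity h t x) :=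
    hχ.one_add_mul_abs_mul_le (by positivity) fun hne =>
      ((hessianBound_sqrt_gammaDensity hh ht x).one_add_mul_abs_laplacian_le
        (hχ.add_rad_le x hne)).trans_eq (by rw [Fintype.card_fin]; ring)
  have hsum := abs_sum_le_card_mul hchi
  rw [← Finset.mul_sum, abs_mul, abs_of_nonneg (by linarith : 0 ≤ 1 + t), Fintype.card_fin] at hsum
  simp_rw [divergence, partialDeriv_truncatedGrad hχ.differentiable hh, Finset.sum_add_distrib,
    ← Finset.mul_sum]
  calc _ ≤ (1 + t) * (|_| + |_|) := mul_le_mul_of_nonneg_left (abs_add_le _ _) (by linarith)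
    _ ≤ _ := by push_cast at hsum; linarith

-- The second derivatives of `h` cancel in the curl.
lemma one_add_mul_abs_curl_truncatedGrad_le (i j : Fin 3) (x : Sp) :
    (1 + t) * |partialDeriv j (truncatedGrad χ h t i.succ) x -
        partialDeriv i (truncatedGrad χ h t j.succ) x| ≤
      2 * K * √(gammaDensity h t x) := by
  have hchi (i j : Fin 3) := hχ.one_add_mul_abs_partialDeriv_mul_le ht
    (abs_pd_le_sqrt_gammaDensity h t x i.succ) j x
  have hcomm : pd j.succ (pd i.succ h) (Fin.cons t x) = pd i.succ (pd j.succ h) (Fin.cons t x) :=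
    partialDeriv_comm hh _ _ _
  rw [partialDeriv_truncatedGrad hχ.differentiable hh,
    partialDeriv_truncatedGrad hχ.differentiable hh, hcomm, add_sub_add_right_eq_sub]
  calc _ ≤ (1 + t) * (|_| + |_|) := mul_le_mul_of_nonneg_left (abs_sub _ _) (by linarith)
    _ ≤ _ := by linarith [hchi i j, hchi j i]

lemma one_add_sq_mul_gradSq_truncatedGrad_zero_le (x : Sp) :
    (1 + t) ^ 2 * gradSq (truncatedGrad χ h t 0) x ≤
      3 * (20 * K + 5) ^ 2 * gammaDensity h t x := by
  have hK := hχ.nonneg ht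
  have hsq (j : Fin 3) : (1 + t) ^ 2 * partialDeriv j (truncatedGrad χ h t 0) x ^ 2 ≤
      (20 * K + 5) ^ 2 * gammaDensity h t x := by
    refine sq_mul_sq_le_of_mul_abs_le (by linarith) (gammaDensity_nonneg h t x)
      ((hχ.one_add_mul_abs_partialDeriv_truncatedGrad_zero_le ht hh j x).trans ?_)
    gcongr
    norm_num
  rw [gradSq, Finset.mul_sum, mul_assoc 3]
  simpa using Finset.sum_le_card_nsmul Finset.univ _ _ fun j _ => hsq j

lemma one_add_sq_mul_divergence_sq_add_curlSq_truncatedGrad_le (x : Sp) :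
    (1 + t) ^ 2 * (divergence (fun i : Fin 3 => truncatedGrad χ h t i.succ) x ^ 2 +
        curlSq (fun i : Fin 3 => truncatedGrad χ h t i.succ) x) ≤
      6 * (20 * K + 5) ^ 2 * gammaDensity h t x := by
  have hK := hχ.nonneg ht
  have ht1 : 0 ≤ 1 + t := by linarith
  have hq := gammaDensity_nonneg h t x
  have hdiv := sq_mul_sq_le_of_mul_abs_le (c := 20 * K + 5) ht1 hq
    ((hχ.one_add_mul_abs_divergence_truncatedGrad_le ht hh x).trans
      (by gcongr; norm_num))
  have hcurl (i j : Fin 3) : (1 + t) ^ 2 * (partialDeriv j (truncatedGrad χ h t i.succ) x -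
      partialDeriv i (truncatedGrad χ h t j.succ) x) ^ 2 ≤
        (20 * K + 5) ^ 2 * gammaDensity h t x :=
    sq_mul_sq_le_of_mul_abs_le ht1 hq
      ((hχ.one_add_mul_abs_curl_truncatedGrad_le ht hh i j x).trans
        (by gcongr; linarith))
  have hsum := Finset.sum_le_card_nsmul Finset.univ _ _ fun i _ =>
    Finset.sum_le_card_nsmul Finset.univ _ _ fun j _ => hcurl i j
  simp only [← Finset.mul_sum, Finset.card_univ, Fintype.card_fin, nsmul_eq_mul] at hsum
  push_cast at hsum
  rw [curlSq]
  linarith [mul_nonneg (sq_nonneg (20 * K + 5)) hq]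

end IsConeCutoff

end TruncatedGradient

section Estimate

lemma mul_integral_le_mul_integral {α : Type*} [MeasurableSpace α] {μ : Measure α} {f g : α → ℝ}
    {c B : ℝ} (hc : 0 < c) (hf : 0 ≤ f) (hg : Integrable g μ)
    (hfg : ∀ x, c * f x ≤ B * g x) : c * ∫ x, f x ∂μ ≤ B * ∫ x, g x ∂μ := by
  rw [← integral_const_mul, ← integral_const_mul]
  exact integral_mono_of_nonneg (.of_forall fun x => mul_nonneg hc.le (hf x)) (hg.const_mul B)
    (.of_forall hfg)

lemma IsConeCutoff.one_add_sq_mul_integral_gradSq_truncatedGrad_le {δ K t : ℝ} {χ : Sp → ℝ}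
    (hχ : IsConeCutoff δ K t χ) (ht : 0 ≤ t) {h : Pt → ℝ} (hh : ContDiff ℝ 3 h)
    (hs : HasCompactSupport h) :
    (1 + t) ^ 2 * ∫ x, ∑ a, gradSq (truncatedGrad χ h t a) x ≤
      (3 * (20 * K + 5)) ^ 2 * ∫ x, gammaDensity h t x := by
  have ht2 : 0 < (1 + t) ^ 2 := by positivity
  have hh2 : ContDiff ℝ 2 h := hh.of_le (by norm_num)
  have hw (a : Fin 4) : ContDiff ℝ 2 (truncatedGrad χ h t a) :=
    contDiff_truncatedGrad hχ.contDiff hh (by norm_num) t a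
  have hws (a : Fin 4) := hasCompactSupport_truncatedGrad χ hs t a
  have hint (a : Fin 4) : Integrable (gradSq (truncatedGrad χ h t a)) :=
    integrable_gradSq ((hw a).of_le (by norm_num)) (hws a)
  have hq := integrable_gammaDensity hh hs t
  have htime : (1 + t) ^ 2 * ∫ x, gradSq (truncatedGrad χ h t 0) x ≤
      3 * (20 * K + 5) ^ 2 * ∫ x, gammaDensity h t x :=
    mul_integral_le_mul_integral ht2 (gradSq_nonneg _) hq
      (hχ.one_add_sq_mul_gradSq_truncatedGrad_zero_le ht hh2)
  have hspace : (1 + t) ^ 2 * ∫ x, ∑ i : Fin 3, gradSq (truncatedGrad χ h t i.succ) x ≤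
      6 * (20 * K + 5) ^ 2 * ∫ x, gammaDensity h t x := by
    rw [integral_sum_gradSq_eq_integral_divergence_sq_add_curlSq
      (w := fun i : Fin 3 => truncatedGrad χ h t i.succ) (fun i => hw i.succ) fun i => hws i.succ]
    exact mul_integral_le_mul_integral ht2 (fun x => add_nonneg (sq_nonneg _) (curlSq_nonneg _ x))
      hq (hχ.one_add_sq_mul_divergence_sq_add_curlSq_truncatedGrad_le ht hh2)
  simp_rw [Fin.sum_univ_succ (n := 3)]
  rw [integral_add (hint 0) (integrable_finsetSum _ fun i _ => hint i.succ)]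
  linarith

lemma IsConeCutoff.sqrt_integral_gradSq_truncatedGrad_le {δ K t : ℝ} {χ : Sp → ℝ}
    (hχ : IsConeCutoff δ K t χ) (ht : 0 ≤ t) {h : Pt → ℝ} (hh : ContDiff ℝ 3 h)
    (hs : HasCompactSupport h) :
    (1 + t) * √(∫ x, ∑ a, gradSq (truncatedGrad χ h t a) x) ≤
      3 * (20 * K + 5) * √(∫ x, gammaDensity h t x) := by
  have hK := hχ.nonneg ht
  have hsqrt := Real.sqrt_le_sqrt
    (hχ.one_add_sq_mul_integral_gradSq_truncatedGrad_le ht hh hs)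
  rwa [Real.sqrt_mul (by positivity), Real.sqrt_mul (by positivity), Real.sqrt_sq (by positivity),
    Real.sqrt_sq (by positivity)] at hsqrt

lemma IsConeCutoff.setIntegral_pow_le {δ K t : ℝ} {χ : Sp → ℝ} (hχ : IsConeCutoff δ K t χ)
    {h : Pt → ℝ} (hh : ContDiff ℝ 1 h) (hs : HasCompactSupport h) :
    ∫ x in {x : Sp | rad x ∉ Set.Icc ((1 - δ) * t) ((1 + δ) * t)},
        (∑ a, (pd a h (Fin.cons t x)) ^ 2) ^ 3 ≤
      ∫ x, (∑ a, truncatedGrad χ h t a x ^ 2) ^ 3 := by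
  have hmeas : MeasurableSet {x : Sp | rad x ∉ Set.Icc ((1 - δ) * t) ((1 + δ) * t)} :=
    (continuous_rad.measurable measurableSet_Icc).compl
  have hw (a : Fin 4) : Continuous (truncatedGrad χ h t a) :=
    (contDiff_truncatedGrad (m := 0) (hχ.contDiff.of_le (by norm_num)) hh (by norm_num) t
      a).continuous
  have hsupp : HasCompactSupport fun x => (∑ a, truncatedGrad χ h t a x ^ 2) ^ 3 := by
    refine .intro (isCompact_iUnion fun a => hasCompactSupport_truncatedGrad χ hs t a)
      fun x hx => ?_
    rw [Set.mem_iUnion, not_exists] at hx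
    simp [fun a => image_eq_zero_of_notMem_tsupport (hx a)]
  have hint : Integrable fun x => (∑ a, truncatedGrad χ h t a x ^ 2) ^ 3 :=
    Continuous.integrable_of_hasCompactSupport (by fun_prop) hsupp
  calc _ = ∫ x in {x : Sp | rad x ∉ Set.Icc ((1 - δ) * t) ((1 + δ) * t)},
        (∑ a, truncatedGrad χ h t a x ^ 2) ^ 3 :=
        setIntegral_congr_fun hmeas fun x hx => by simp [truncatedGrad, hχ.eq_one x hx]
    _ ≤ _ := setIntegral_le_integral hint (.of_forall fun x => by positivity)

lemma jb_le_one_add {t : ℝ} (ht : 0 ≤ t) : jb t ≤ 1 + t :=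
  Real.sqrt_le_iff.2 ⟨by linarith, by nlinarith⟩

theorem stmt_10_general (δ : ℝ) (hδ0 : 0 < δ) :
    ∃ C : ℝ, 0 < C ∧
      ∀ (h : Pt → ℝ), ContDiff ℝ 3 h → HasCompactSupport h →
        ∀ t : ℝ, 0 ≤ t →
          (∫ x in {x : Sp | rad x ∉ Set.Icc ((1 - δ) * t) ((1 + δ) * t)},
              (∑ a, (pd a h (Fin.cons t x)) ^ 2) ^ 3) ^ ((1:ℝ)/6)
            ≤ C * (jb t)⁻¹ * gammaNorm h t := by
  obtain ⟨S, hS, hsobolev⟩ := exists_sobolev_six_family (Fin 4)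
  obtain ⟨K, hcutoff⟩ := exists_isConeCutoff hδ0
  choose χ hχ using hcutoff
  have hK : 0 ≤ K := (hχ 0).nonneg le_rfl
  refine ⟨S * (3 * (20 * K + 5)) + 1, by positivity, fun h hh hs t ht => ?_⟩
  have hjb : 0 < jb t := Real.sqrt_pos.2 (by positivity)
  have hN := gammaNorm_nonneg h t
  calc _ ≤ (∫ x, (∑ a, truncatedGrad (χ t) h t a x ^ 2) ^ 3) ^ ((1 : ℝ) / 6) :=
        Real.rpow_le_rpow (by positivity)
          ((hχ t).setIntegral_pow_le (hh.of_le (by norm_num)) hs) (by norm_num)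
    _ ≤ S * √(∫ x, ∑ a, gradSq (truncatedGrad (χ t) h t a) x) :=
        hsobolev _ (fun a => contDiff_truncatedGrad ((hχ t).contDiff.of_le (by norm_num)) hh
          (by norm_num) t a) fun a => hasCompactSupport_truncatedGrad _ hs t a
    _ ≤ S * (3 * (20 * K + 5) * √(∫ x, gammaDensity h t x) / (1 + t)) := by
        gcongr
        rw [le_div_iff₀' (by linarith)]
        exact (hχ t).sqrt_integral_gradSq_truncatedGrad_le ht hh hs
    _ ≤ S * (3 * (20 * K + 5) * gammaNorm h t / jb t) := by
        gcongr
        exacts [sqrt_integral_gammaDensity_le hh hs t, jb_le_one_add ht]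
    _ = S * (3 * (20 * K + 5)) * ((jb t)⁻¹ * gammaNorm h t) := by ring
    _ ≤ (S * (3 * (20 * K + 5)) + 1) * ((jb t)⁻¹ * gammaNorm h t) := by gcongr; linarith
    _ = _ := (mul_assoc _ _ _).symm

end Estimate

/-- inequality (3.4) of the paper.  Fix `0 < δ < 1/2`.  For
`h ∈ C₀^∞(ℝ₊×ℝ³)` and `t ≥ 0`, the `L⁶` norm of `h'(t,·)` away from the light cone,
i.e. over `{x : |x| ∉ [(1-δ)t,(1+δ)t]}`, is bounded by
`C⟨t⟩⁻¹(Σ_{|α|≤1}‖Γ^α h'(t,·)‖₂ + ‖⟨t+r⟩□h(t,·)‖₂)`. -/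
theorem stmt_10 (δ : ℝ) (hδ0 : 0 < δ) (hδ : δ < 1/2) :
    ∃ C : ℝ, 0 < C ∧
      ∀ (h : Pt → ℝ), ContDiff ℝ (⊤ : ℕ∞) h → HasCompactSupport h →
        (∀ X : Pt, X 0 < 0 → h X = 0) →
        ∀ t : ℝ, 0 ≤ t →
          (∫ x in {x : Sp | rad x ∉ Set.Icc ((1 - δ) * t) ((1 + δ) * t)},
              (∑ a, (pd a h (Fin.cons t x)) ^ 2) ^ 3) ^ ((1:ℝ)/6)
            ≤ C * (jb t)⁻¹ *
                (∑ m ∈ Finset.range 2, ∑ α : Fin m → Fin 8,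
                    (∫ x : Sp, ∑ a, (GamComp α (pd a h) (Fin.cons t x)) ^ 2) ^ ((1:ℝ)/2)
                  + (∫ x : Sp,
                      jb (t + rad x) ^ 2 * (box1 h (Fin.cons t x)) ^ 2) ^ ((1:ℝ)/2)) := by
  obtain ⟨C, hC, hmain⟩ := stmt_10_general δ hδ0
  exact ⟨C, hC, fun h hh hs _ => hmain h (by exact_mod_cast contDiff_infty.1 hh 3) hs⟩
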